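/- arXiv:1906.03009 — 8 statements merged into one kernel-verified Lean document; each statement's English description precedes it below -/
import Mathlib

section
/- Let H and L be real Hilbert spaces, j : H → L a bounded linear map, L_σ a closed subspace of L with orthogonal projection P : L → L, and V⁰ a closed subspace of H with j(V⁰) ⊆ L_σ. Assume the Poincaré–Friedrichs inequality ‖j w‖_L ≤ C_PF·‖w‖_H for all w ∈ V⁰, with C_PF > 0. Let ν > 0, f ∈ L, and let v ∈ V⁰ satisfy ν·⟨v, w⟩_H = ⟨f, j w⟩_L for all w ∈ V⁰. Then ‖v‖_H ≤ (C_PF/ν)·‖P f‖_L. -/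
/-!
Testing the weak equation with `v` itself gives the energy identity `ν‖v‖² = ⟪f, j v⟫`. Since `j v`
lies in `Lσ`, the right-hand side only sees the class of `f` modulo `Lσᗮ`, so `f` may be replaced by
`P f` before Cauchy–Schwarz and Poincaré–Friedrichs are applied.
-/

open RealInnerProductSpace

theorem le_div_of_mul_sq_le_mul {R : Type*} [Field R] [LinearOrder R] [IsStrictOrderedRing R]
    {a b c : R} (hc : 0 < c) (hb : 0 ≤ b) (h : c * a ^ 2 ≤ b * a) : a ≤ b / c := by
  rcases le_or_gt a 0 with ha | ha
  · exact ha.trans (div_nonneg hb hc.le)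
  · rw [le_div_iff₀' hc]
    exact le_of_mul_le_mul_right (by rwa [mul_assoc, ← sq]) ha

section InnerProduct

variable {𝕜 H L : Type*} [RCLike 𝕜]
  [SeminormedAddCommGroup H] [InnerProductSpace 𝕜 H]
  [NormedAddCommGroup L] [InnerProductSpace 𝕜 L]

theorem inner_eq_inner_of_sub_mem_orthogonal {K : Submodule 𝕜 L} {f g u : L}
    (hfg : f - g ∈ Kᗮ) (hu : u ∈ K) : inner 𝕜 f u = inner 𝕜 g u := by
  rw [← sub_eq_zero, ← inner_sub_left]
  exact Submodule.inner_left_of_mem_orthogonal hu hfg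

theorem continuous_stability_estimate_general
    (j : H → L) (K : Submodule 𝕜 L) (V : Set H) (hjV : ∀ w ∈ V, j w ∈ K)
    {C : ℝ} (hC : 0 ≤ C) (hPF : ∀ w ∈ V, ‖j w‖ ≤ C * ‖w‖)
    {ν : ℝ} (hν : 0 < ν) {f g : L} (hfg : f - g ∈ Kᗮ)
    {v : H} (hv : v ∈ V) (hweak : ∀ w ∈ V, (ν : 𝕜) * inner 𝕜 v w = inner 𝕜 f (j w)) :
    ‖v‖ ≤ (C / ν) * ‖g‖ := by
  have henergy : ν * ‖v‖ ^ 2 = RCLike.re (inner 𝕜 f (j v)) := by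
    rw [← hweak v hv, RCLike.re_ofReal_mul, inner_self_eq_norm_sq]
  have hbound : ν * ‖v‖ ^ 2 ≤ C * ‖g‖ * ‖v‖ := calc
    ν * ‖v‖ ^ 2 = RCLike.re (inner 𝕜 g (j v)) := by
      rw [henergy, inner_eq_inner_of_sub_mem_orthogonal hfg (hjV v hv)]
    _ ≤ ‖g‖ * ‖j v‖ := re_inner_le_norm g (j v)
    _ ≤ ‖g‖ * (C * ‖v‖) := by gcongr; exact hPF v hv
    _ = C * ‖g‖ * ‖v‖ := by ring
  rw [div_mul_eq_mul_div]
  exact le_div_of_mul_sq_le_mul hν (by positivity) hbound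

end InnerProduct

/-- Abstract form of Lemma 3.5 (continuous stability estimate): the norm of the Stokes
velocity is bounded by the norm of the Helmholtz–Hodge projector of the data only,
`‖v‖_H ≤ (C_PF/ν)‖P f‖_L`, where `P` is the orthogonal projection onto `Lσ` and
`C_PF` is the Poincaré–Friedrichs constant. -/
theorem continuous_stability_estimate
    {H L : Type*}
    [NormedAddCommGroup H] [InnerProductSpace ℝ H] [CompleteSpace H]
    [NormedAddCommGroup L] [InnerProductSpace ℝ L] [CompleteSpace L]
    (j : H →L[ℝ] L)
    (Lσ : Submodule ℝ L) (hLσclosed : IsClosed (Lσ : Set L))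
    -- `P` is the orthogonal projection of `L` onto `Lσ`
    (P : L → L) (hPmem : ∀ x, P x ∈ Lσ) (hPorth : ∀ x, x - P x ∈ Lσᗮ)
    (V0 : Submodule ℝ H) (hV0closed : IsClosed (V0 : Set H))
    (hjV0 : ∀ w ∈ V0, j w ∈ Lσ)
    (C_PF : ℝ) (hC_PF : 0 < C_PF)
    (hPF : ∀ w ∈ V0, ‖j w‖ ≤ C_PF * ‖w‖)
    (ν : ℝ) (hν : 0 < ν) (f : L)
    (v : H) (hv : v ∈ V0)
    (hweak : ∀ w ∈ V0, ν * ⟪v, w⟫ = ⟪f, j w⟫) :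
    ‖v‖ ≤ (C_PF / ν) * ‖P f‖ :=
  continuous_stability_estimate_general j Lσ V0 hjV0 hC_PF.le hPF hν (hPorth f) hv hweak
end

section
/- Let H, L, Q be real Hilbert spaces, j : H → L a bounded linear map, L_σ a closed subspace of L with orthogonal projection P : L → L, and D : H → Q a bounded linear map with ‖D w‖_Q ≤ ‖w‖_H for all w ∈ H. Let Q_h be a closed subspace of Q with orthogonal projection π_h : Q → Q, and let V_h⁰ be a closed subspace of H such that π_h(D w) = 0 for all w ∈ V_h⁰. Assume ‖j w‖_L ≤ C_PF·‖w‖_H for all w ∈ V_h⁰, with C_PF > 0. Let ν > 0 and f ∈ L, and suppose there is α ∈ Q with ⟨f − P f, j w⟩_L = −⟨α, D w⟩_Q for all w ∈ H. If v_h ∈ V_h⁰ satisfies ν·⟨v_h, w⟩_H = ⟨f, j w⟩_L for all w ∈ V_h⁰, then ‖v_h‖_H ≤ C_PF·ν⁻¹·‖P f‖_L + ν⁻¹·‖α − π_h α‖_Q. -/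
/-!
Testing the discrete equation with `w = vh` gives
`ν ‖vh‖² = ⟪f, j vh⟫ = ⟪P f, j vh⟫ - ⟪α, D vh⟫`. A discretely divergence-free `vh` only satisfies
`D vh ∈ Qhᗮ`, so the gradient part `α` of the load does not drop out; but it is only seen modulo
`Qh`, and `α` may be replaced by `α - q` for any `q ∈ Qh`. Cauchy–Schwarz and the bounds on `j vh`
and `D vh` then control the right-hand side by a multiple of `‖vh‖`, which cancels.
-/

open RealInnerProductSpace

section

open scoped InnerProductSpace

variable {𝕜 H L Q : Type*} [RCLike 𝕜]
  [SeminormedAddCommGroup H] [InnerProductSpace 𝕜 H]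
  [SeminormedAddCommGroup L] [InnerProductSpace 𝕜 L]
  [NormedAddCommGroup Q] [InnerProductSpace 𝕜 Q]

theorem norm_inner_le_norm_sub_mul_norm_of_mem_orthogonal {K : Submodule 𝕜 Q} {q y : Q}
    (hq : q ∈ K) (hy : y ∈ Kᗮ) (x : Q) : ‖⟪x, y⟫_𝕜‖ ≤ ‖x - q‖ * ‖y‖ := by
  have hsub : ⟪x - q, y⟫_𝕜 = ⟪x, y⟫_𝕜 := by
    rw [inner_sub_left, Submodule.inner_right_of_mem_orthogonal hq hy, sub_zero]
  exact hsub ▸ norm_inner_le_norm (x - q) y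

theorem norm_inner_le_add_of_inner_sub_eq_neg {K : Submodule 𝕜 Q} {f g u : L} {α q d : Q}
    (hq : q ∈ K) (hd : d ∈ Kᗮ) (hfg : ⟪f - g, u⟫_𝕜 = -⟪α, d⟫_𝕜) :
    ‖⟪f, u⟫_𝕜‖ ≤ ‖g‖ * ‖u‖ + ‖α - q‖ * ‖d‖ :=
  calc ‖⟪f, u⟫_𝕜‖ = ‖⟪g, u⟫_𝕜 - ⟪α, d⟫_𝕜‖ := by
        rw [sub_eq_add_neg, ← hfg, ← inner_add_left, add_sub_cancel]
    _ ≤ ‖⟪g, u⟫_𝕜‖ + ‖⟪α, d⟫_𝕜‖ := norm_sub_le _ _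
    _ ≤ ‖g‖ * ‖u‖ + ‖α - q‖ * ‖d‖ :=
        add_le_add (norm_inner_le_norm g u)
          (norm_inner_le_norm_sub_mul_norm_of_mem_orthogonal hq hd α)

theorem norm_le_inv_mul_of_norm_smul_inner_self_le {v : H} {ν M : ℝ} (hν : 0 < ν) (hM : 0 ≤ M)
    (h : ‖ν • ⟪v, v⟫_𝕜‖ ≤ M * ‖v‖) : ‖v‖ ≤ ν⁻¹ * M := by
  rcases (norm_nonneg v).eq_or_lt with hv | hv
  · rw [← hv]
    positivity
  · have henergy : ν * ‖v‖ * ‖v‖ ≤ M * ‖v‖ := by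
      rwa [norm_smul, Real.norm_of_nonneg hν.le, inner_self_eq_norm_sq_to_K, norm_pow,
        RCLike.norm_ofReal, abs_norm, sq, ← mul_assoc] at h
    exact (le_inv_mul_iff₀ hν).2 (le_of_mul_le_mul_right henergy hv)

theorem discrete_stability_estimate_classical_general
    (j : H →ₗ[𝕜] L) (D : H →ₗ[𝕜] Q) {Qh : Submodule 𝕜 Q} {Vh0 : Submodule 𝕜 H}
    (hdiv : ∀ w ∈ Vh0, D w ∈ Qhᗮ)
    {C_PF C_D : ℝ} (hC_PF : 0 ≤ C_PF) (hC_D : 0 ≤ C_D)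
    (hPF : ∀ w ∈ Vh0, ‖j w‖ ≤ C_PF * ‖w‖) (hD : ∀ w ∈ Vh0, ‖D w‖ ≤ C_D * ‖w‖)
    {ν : ℝ} (hν : 0 < ν) {f g : L} {α q : Q} (hq : q ∈ Qh)
    (hα : ∀ w ∈ Vh0, ⟪f - g, j w⟫_𝕜 = -⟪α, D w⟫_𝕜)
    {vh : H} (hvh : vh ∈ Vh0) (hweak : ∀ w ∈ Vh0, ν • ⟪vh, w⟫_𝕜 = ⟪f, j w⟫_𝕜) :
    ‖vh‖ ≤ C_PF * ν⁻¹ * ‖g‖ + C_D * ν⁻¹ * ‖α - q‖ := by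
  have hload : ‖ν • ⟪vh, vh⟫_𝕜‖ ≤ (C_PF * ‖g‖ + C_D * ‖α - q‖) * ‖vh‖ :=
    calc ‖ν • ⟪vh, vh⟫_𝕜‖ = ‖⟪f, j vh⟫_𝕜‖ := by rw [hweak vh hvh]
      _ ≤ ‖g‖ * ‖j vh‖ + ‖α - q‖ * ‖D vh‖ :=
          norm_inner_le_add_of_inner_sub_eq_neg hq (hdiv vh hvh) (hα vh hvh)
      _ ≤ ‖g‖ * (C_PF * ‖vh‖) + ‖α - q‖ * (C_D * ‖vh‖) := by
          gcongr
          exacts [hPF vh hvh, hD vh hvh]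
      _ = (C_PF * ‖g‖ + C_D * ‖α - q‖) * ‖vh‖ := by ring
  calc ‖vh‖ ≤ ν⁻¹ * (C_PF * ‖g‖ + C_D * ‖α - q‖) :=
        norm_le_inv_mul_of_norm_smul_inner_self_le hν (by positivity) hload
    _ = C_PF * ν⁻¹ * ‖g‖ + C_D * ν⁻¹ * ‖α - q‖ := by ring

end

/-- Abstract form of the second part of Lemma 4.4 (discrete stability estimate for classical,
non-pressure-robust mixed methods): `‖v_h‖ ≤ C_PF ν⁻¹‖P f‖ + ν⁻¹‖α − π_h α‖`, where `α`
abstracts the gradient part of the Helmholtz–Hodge decomposition of `f` via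
`⟨f − P f, j w⟩ = −⟨α, D w⟩` and `π_h` is the orthogonal projection onto the discrete
pressure space `Qh`. -/
theorem discrete_stability_estimate_classical
    {H L Q : Type*}
    [NormedAddCommGroup H] [InnerProductSpace ℝ H] [CompleteSpace H]
    [NormedAddCommGroup L] [InnerProductSpace ℝ L] [CompleteSpace L]
    [NormedAddCommGroup Q] [InnerProductSpace ℝ Q] [CompleteSpace Q]
    (j : H →L[ℝ] L)
    (Lσ : Submodule ℝ L) (hLσclosed : IsClosed (Lσ : Set L))
    -- `P` is the orthogonal projection of `L` onto `Lσ`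
    (P : L → L) (hPmem : ∀ x, P x ∈ Lσ) (hPorth : ∀ x, x - P x ∈ Lσᗮ)
    (D : H →L[ℝ] Q) (hD : ∀ w : H, ‖D w‖ ≤ ‖w‖)
    (Qh : Submodule ℝ Q) (hQhclosed : IsClosed (Qh : Set Q))
    -- `πh` is the orthogonal projection of `Q` onto `Qh`
    (πh : Q → Q) (hπmem : ∀ q, πh q ∈ Qh) (hπorth : ∀ q, q - πh q ∈ Qhᗮ)
    (Vh0 : Submodule ℝ H) (hVh0closed : IsClosed (Vh0 : Set H))
    (hdiscdivfree : ∀ w ∈ Vh0, πh (D w) = 0)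
    (C_PF : ℝ) (hC_PF : 0 < C_PF)
    (hPF : ∀ w ∈ Vh0, ‖j w‖ ≤ C_PF * ‖w‖)
    (ν : ℝ) (hν : 0 < ν) (f : L)
    (α : Q) (hα : ∀ w : H, ⟪f - P f, j w⟫ = -⟪α, D w⟫)
    (vh : H) (hvh : vh ∈ Vh0)
    (hweak : ∀ w ∈ Vh0, ν * ⟪vh, w⟫ = ⟪f, j w⟫) :
    ‖vh‖ ≤ C_PF * ν⁻¹ * ‖P f‖ + ν⁻¹ * ‖α - πh α‖ := by
  have hdiv : ∀ w ∈ Vh0, D w ∈ Qhᗮ := fun w hw ↦ by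
    simpa only [hdiscdivfree w hw, sub_zero] using hπorth (D w)
  simpa only [one_mul] using discrete_stability_estimate_classical_general (C_D := 1)
    j.toLinearMap D.toLinearMap hdiv hC_PF.le zero_le_one hPF
    (fun w _ ↦ (hD w).trans_eq (one_mul _).symm) hν (hπmem α) (fun w _ ↦ hα w) hvh hweak
end

section
/- Let H, L, Q be real Hilbert spaces, j : H → L a bounded linear map, and D : H → Q a bounded linear map. Let V⁰ be a closed subspace of H with V⁰ ⊆ ker D, and let S : H → H be the orthogonal projection onto V⁰. Let Q_h be a closed subspace of Q with orthogonal projection π_h : Q → Q, and let V_h⁰ be a closed subspace of H such that π_h(D w) = 0 for all w ∈ V_h⁰. Assume there is δ ≥ 0 such that for every z ∈ L there exist ψ ∈ V⁰ and r ∈ Q satisfying ⟨ψ, y⟩_H − ⟨r, D y⟩_Q = ⟨z, j y⟩_L for all y ∈ H, and ‖r − π_h r‖_Q ≤ δ·‖z‖_L. Then for every w ∈ V_h⁰ it holds ‖j w − j(S w)‖_L ≤ δ·‖D w‖_Q. -/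
/-!
Solve the dual problem with datum `z = j e`, where `e = w - S w`, and test it with `e` itself.
The term `⟪ψ, e⟫` vanishes because `e` is orthogonal to `V0`, and `D e = D w` is orthogonal to
`Qh` because `πh (D w) = 0`. Hence `‖z‖² = -⟪r, D w⟫ = -⟪r - πh r, D w⟫ ≤ δ ‖z‖ ‖D w‖`, and one
factor `‖z‖` cancels.
-/

open RealInnerProductSpace

section DualProblem

open scoped InnerProductSpace

variable {𝕜 H L Q : Type*} [RCLike 𝕜]
  [SeminormedAddCommGroup H] [InnerProductSpace 𝕜 H]
  [SeminormedAddCommGroup L] [InnerProductSpace 𝕜 L]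
  [SeminormedAddCommGroup Q] [InnerProductSpace 𝕜 Q]

theorem norm_inner_le_norm_sub_mul_norm_of_inner_eq_zero {p q : Q} (hpq : ⟪p, q⟫_𝕜 = 0)
    (r : Q) : ‖⟪r, q⟫_𝕜‖ ≤ ‖r - p‖ * ‖q‖ := calc
  ‖⟪r, q⟫_𝕜‖ = ‖⟪r - p, q⟫_𝕜‖ := by rw [inner_sub_left, hpq, sub_zero]
  _ ≤ ‖r - p‖ * ‖q‖ := norm_inner_le_norm _ _

/-- The pair `(ψ, r)` satisfies the weak momentum equation of the dual Stokes problem with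
datum `z`. The constraint that `ψ` be divergence-free is not included; it is imposed separately
by requiring `ψ ∈ V0`. -/
def IsDualSolution (j : H →ₗ[𝕜] L) (D : H →ₗ[𝕜] Q) (z : L) (ψ : H) (r : Q) : Prop :=
  ∀ y : H, ⟪ψ, y⟫_𝕜 - ⟪r, D y⟫_𝕜 = ⟪z, j y⟫_𝕜

namespace IsDualSolution

variable {j : H →ₗ[𝕜] L} {D : H →ₗ[𝕜] Q} {e ψ : H} {r : Q}

theorem norm_sq_eq_norm_inner (h : IsDualSolution j D (j e) ψ r) (hψe : ⟪ψ, e⟫_𝕜 = 0) :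
    ‖j e‖ ^ 2 = ‖⟪r, D e⟫_𝕜‖ := by
  have htest : -⟪r, D e⟫_𝕜 = ⟪j e, j e⟫_𝕜 := by simpa only [hψe, zero_sub] using h e
  rw [← norm_neg ⟪r, D e⟫_𝕜, htest, inner_self_eq_norm_sq_to_K, norm_pow, RCLike.norm_ofReal,
    abs_norm]

theorem norm_le_mul_norm {p : Q} {δ : ℝ} (h : IsDualSolution j D (j e) ψ r)
    (hψe : ⟪ψ, e⟫_𝕜 = 0) (hpe : ⟪p, D e⟫_𝕜 = 0)
    (hδ : 0 ≤ δ) (hr : ‖r - p‖ ≤ δ * ‖j e‖) : ‖j e‖ ≤ δ * ‖D e‖ := by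
  have hmul : ‖j e‖ * ‖j e‖ ≤ δ * ‖D e‖ * ‖j e‖ := calc
    ‖j e‖ * ‖j e‖ = ‖⟪r, D e⟫_𝕜‖ := by rw [← sq, h.norm_sq_eq_norm_inner hψe]
    _ ≤ ‖r - p‖ * ‖D e‖ := norm_inner_le_norm_sub_mul_norm_of_inner_eq_zero hpe r
    _ ≤ δ * ‖j e‖ * ‖D e‖ := by gcongr
    _ = δ * ‖D e‖ * ‖j e‖ := mul_right_comm ..
  rcases (norm_nonneg (j e)).eq_or_lt with hzero | hpos
  · rw [← hzero]
    positivity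
  · exact le_of_mul_le_mul_right hmul hpos

end IsDualSolution

end DualProblem

open scoped InnerProductSpace in
theorem duality_estimate_general
    {𝕜 H L Q : Type*} [RCLike 𝕜]
    [NormedAddCommGroup H] [InnerProductSpace 𝕜 H]
    [SeminormedAddCommGroup L] [InnerProductSpace 𝕜 L]
    [NormedAddCommGroup Q] [InnerProductSpace 𝕜 Q]
    (j : H →ₗ[𝕜] L) (D : H →ₗ[𝕜] Q)
    (V0 : Submodule 𝕜 H) (hV0kerD : V0 ≤ D.ker)
    (S : H → H) (hSmem : ∀ x, S x ∈ V0) (hSorth : ∀ x, x - S x ∈ V0ᗮ)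
    (Qh : Submodule 𝕜 Q)
    (πh : Q → Q) (hπmem : ∀ q, πh q ∈ Qh) (hπorth : ∀ q, q - πh q ∈ Qhᗮ)
    {δ : ℝ} (hδ : 0 ≤ δ)
    (hdual : ∀ z : L, ∃ ψ ∈ V0, ∃ r : Q, IsDualSolution j D z ψ r ∧ ‖r - πh r‖ ≤ δ * ‖z‖)
    {w : H} (hw : πh (D w) = 0) :
    ‖j w - j (S w)‖ ≤ δ * ‖D w‖ := by
  obtain ⟨ψ, hψ, r, hsol, hr⟩ := hdual (j (w - S w))
  have hψe : ⟪ψ, w - S w⟫_𝕜 = 0 := V0.inner_right_of_mem_orthogonal hψ (hSorth w)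
  have hDe : D (w - S w) = D w := by
    rw [map_sub, LinearMap.mem_ker.mp (hV0kerD (hSmem w)), sub_zero]
  have hDw : D w ∈ Qhᗮ := by simpa only [hw, sub_zero] using hπorth (D w)
  have hpe : ⟪πh r, D (w - S w)⟫_𝕜 = 0 := by
    rw [hDe, Qh.inner_right_of_mem_orthogonal (hπmem r) hDw]
  rw [← map_sub, ← hDe]
  exact hsol.norm_le_mul_norm hψe hpe hδ hr

/-- Abstract form of the duality (Aubin–Nitsche) estimate, Lemma 5.2:
`‖j w − j(S w)‖_L ≤ δ‖D w‖_Q` for all discretely divergence-free `w ∈ Vh0`, where `S` is the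
orthogonal projection onto the divergence-free subspace `V⁰ ⊆ ker D`, and `δ` encodes the
regularity of the dual Stokes problem combined with the pressure approximation property. -/
theorem duality_estimate
    {H L Q : Type*}
    [NormedAddCommGroup H] [InnerProductSpace ℝ H] [CompleteSpace H]
    [NormedAddCommGroup L] [InnerProductSpace ℝ L] [CompleteSpace L]
    [NormedAddCommGroup Q] [InnerProductSpace ℝ Q] [CompleteSpace Q]
    (j : H →L[ℝ] L) (D : H →L[ℝ] Q)
    (V0 : Submodule ℝ H) (hV0closed : IsClosed (V0 : Set H))
    (hV0kerD : ∀ w ∈ V0, D w = 0)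
    -- `S` is the orthogonal projection of `H` onto `V0`
    (S : H → H) (hSmem : ∀ x, S x ∈ V0) (hSorth : ∀ x, x - S x ∈ V0ᗮ)
    (Qh : Submodule ℝ Q) (hQhclosed : IsClosed (Qh : Set Q))
    -- `πh` is the orthogonal projection of `Q` onto `Qh`
    (πh : Q → Q) (hπmem : ∀ q, πh q ∈ Qh) (hπorth : ∀ q, q - πh q ∈ Qhᗮ)
    (Vh0 : Submodule ℝ H) (hVh0closed : IsClosed (Vh0 : Set H))
    (hdiscdivfree : ∀ w ∈ Vh0, πh (D w) = 0)
    (δ : ℝ) (hδ : 0 ≤ δ)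
    -- solvability of the dual Stokes problem with the corresponding regularity estimate
    (hdual : ∀ z : L, ∃ ψ ∈ V0, ∃ r : Q,
      (∀ y : H, ⟪ψ, y⟫ - ⟪r, D y⟫ = ⟪z, j y⟫) ∧ ‖r - πh r‖ ≤ δ * ‖z‖) :
    ∀ w ∈ Vh0, ‖j w - j (S w)‖ ≤ δ * ‖D w‖ :=
  fun w hw ↦ duality_estimate_general (j : H →ₗ[ℝ] L) (D : H →ₗ[ℝ] Q) V0 hV0kerD
    S hSmem hSorth Qh πh hπmem hπorth hδ hdual (hdiscdivfree w hw)
end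

section
/- Under the hypotheses of the classical consistency error estimate — namely: H, L, Q real Hilbert spaces, j : H → L bounded linear, L_σ ⊆ L closed with orthogonal projection P, D : H → Q bounded linear with ‖D w‖_Q ≤ ‖w‖_H for all w ∈ H; V⁰ ⊆ H closed with j(V⁰) ⊆ L_σ, V⁰ ⊆ ker D, and orthogonal projection S onto V⁰; Q_h ⊆ Q closed with orthogonal projection π_h; V_h⁰ ⊆ V_h closed subspaces of H with π_h(D w) = 0 for all w ∈ V_h⁰ and orthogonal projection S_h onto V_h⁰; ‖j w − j(S w)‖_L ≤ ε₂‖w‖_H for all w ∈ V_h⁰; ν > 0, f ∈ L, α ∈ Q with ⟨f − Pf, j w⟩_L = −⟨α, D w⟩_Q for all w ∈ H and ‖α − π_h α‖_Q ≤ δ_π‖f − Pf‖_L; v ∈ V⁰ with ν⟨v, w⟩_H = ⟨f, j w⟩_L for all w ∈ V⁰ and v_h ∈ V_h⁰ with ν⟨v_h, w⟩_H = ⟨f, j w⟩_L for all w ∈ V_h⁰ — assume in addition the best-approximation property ‖v − S_h(v)‖_H ≤ C_F'·inf_{w ∈ V_h} ‖v − w‖_H for some C_F' ≥ 1. Then ‖v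 − v_h‖²_H ≤ C_F'²·(inf_{w ∈ V_h} ‖v − w‖_H)² + (ε₂·ν⁻¹·‖P f‖_L + δ_π·ν⁻¹·‖f − P f‖_L)². -/
open RealInnerProductSpace

/-!
Write `z` for the projection of `v` onto `V_h⁰`, that is `z = S_h v`. Since `v - z ⟂ V_h⁰`,
Pythagoras splits `‖v - v_h‖²` into the best-approximation error `‖v - z‖²` and the consistency
error `‖v_h - z‖²`. Subtracting the continuous equation tested with `S w` from the discrete one
tested with `w` gives `ν⟪v_h - z, w⟫ = ⟪f, j w - j (S w)⟫` for `w ∈ V_h⁰`. Split `f` into `p = P f`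
and `f - p`: the part along `p` is small by duality, while the gradient part only sees
`⟪α - α_h, D w⟫` with `α_h = π_h α`, as `D (S w) = 0` and `D w ⟂ Q_h`. The choice `w = v_h - z`
then bounds the consistency error.
-/

section Orthogonality

variable {𝕜 E : Type*} [RCLike 𝕜] [NormedAddCommGroup E] [InnerProductSpace 𝕜 E]
  {K : Submodule 𝕜 E} {u x y z : E}

theorem inner_left_eq_of_sub_mem_orthogonal (h : x - y ∈ Kᗮ) (hu : u ∈ K) :
    inner 𝕜 x u = inner 𝕜 y u := by
  rw [← sub_eq_zero, ← inner_sub_left]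
  exact Submodule.inner_left_of_mem_orthogonal hu h

theorem inner_right_eq_of_sub_mem_orthogonal (h : x - y ∈ Kᗮ) (hu : u ∈ K) :
    inner 𝕜 u x = inner 𝕜 u y := by
  rw [← sub_eq_zero, ← inner_sub_right]
  exact Submodule.inner_right_of_mem_orthogonal hu h

theorem norm_sub_sq_eq_add_of_sub_mem_orthogonal (h : x - z ∈ Kᗮ) (hz : z ∈ K) (hy : y ∈ K) :
    ‖x - y‖ ^ 2 = ‖x - z‖ ^ 2 + ‖y - z‖ ^ 2 := by
  have horth : inner 𝕜 (x - z) (z - y) = 0 :=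
    Submodule.inner_left_of_mem_orthogonal (K.sub_mem hz hy) h
  have hpyth := norm_add_sq_eq_norm_sq_add_norm_sq_of_inner_eq_zero _ _ horth
  rwa [sub_add_sub_cancel, norm_sub_rev z y, ← sq, ← sq, ← sq] at hpyth

end Orthogonality

theorem norm_le_of_norm_inner_self_le {𝕜 E : Type*} [RCLike 𝕜] [SeminormedAddCommGroup E]
    [InnerProductSpace 𝕜 E] {x : E} {C : ℝ} (hC : 0 ≤ C) (h : ‖inner 𝕜 x x‖ ≤ C * ‖x‖) :
    ‖x‖ ≤ C := by
  rw [inner_self_eq_norm_sq_to_K, norm_pow, RCLike.norm_ofReal, abs_norm, sq] at h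
  rcases (norm_nonneg x).eq_or_lt with hx | hx
  · rwa [← hx]
  · exact le_of_mul_le_mul_right h hx

section Galerkin

variable {𝕜 H : Type*} [RCLike 𝕜] [NormedAddCommGroup H] [InnerProductSpace 𝕜 H]

/-- `u ∈ V` solves the variational problem `ν⟪u, w⟫ = ℓ w` for all test vectors `w ∈ V`. Both the
continuous and the discrete Stokes velocity are of this form, for different spaces `V`. The right
hand side `ℓ` is a bare function, since the error equation uses only its values. -/
structure IsGalerkinSolution (ν : ℝ) (ℓ : H → 𝕜) (V : Submodule 𝕜 H) (u : H) : Prop where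
  mem : u ∈ V
  weak : ∀ w ∈ V, (ν : 𝕜) * inner 𝕜 u w = ℓ w

theorem IsGalerkinSolution.mul_inner_sub_eq_sub {ν : ℝ} {ℓ : H → 𝕜} {V Vh : Submodule 𝕜 H}
    {v vh z w s : H} (hvh : IsGalerkinSolution ν ℓ Vh vh) (hv : IsGalerkinSolution ν ℓ V v)
    (hvz : v - z ∈ Vhᗮ) (hw : w ∈ Vh) (hs : s ∈ V) (hws : w - s ∈ Vᗮ) :
    (ν : 𝕜) * inner 𝕜 (vh - z) w = ℓ w - ℓ s :=
  calc (ν : 𝕜) * inner 𝕜 (vh - z) w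
      = ν * inner 𝕜 vh w - ν * inner 𝕜 v w := by
        rw [inner_sub_left, mul_sub, inner_left_eq_of_sub_mem_orthogonal hvz hw]
    _ = ν * inner 𝕜 vh w - ν * inner 𝕜 v s := by
        rw [inner_right_eq_of_sub_mem_orthogonal hws hv.mem]
    _ = ℓ w - ℓ s := by rw [hvh.weak w hw, hv.weak s hs]

end Galerkin

section MixedMethod

variable {𝕜 H L Q : Type*} [RCLike 𝕜]
  [NormedAddCommGroup H] [InnerProductSpace 𝕜 H]
  [NormedAddCommGroup L] [InnerProductSpace 𝕜 L]
  [NormedAddCommGroup Q] [InnerProductSpace 𝕜 Q]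
  {j : H →ₗ[𝕜] L} {D : H →ₗ[𝕜] Q} {Qh : Submodule 𝕜 Q} {α αh : Q}

theorem inner_gradient_sub_eq {g : L} {w s : H}
    (hg : ∀ w, inner 𝕜 g (j w) = -inner 𝕜 α (D w)) (hαh : αh ∈ Qh)
    (hw : D w ∈ Qhᗮ) (hs : D s = 0) :
    inner 𝕜 g (j w - j s) = -inner 𝕜 (α - αh) (D w) := by
  rw [inner_sub_right, hg, hg, hs, inner_zero_right, inner_sub_left,
    Submodule.inner_right_of_mem_orthogonal hαh hw, neg_zero, sub_zero, sub_zero]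

theorem norm_inner_sub_inner_le {f p : L} {w s : H} {ε δ : ℝ}
    (hD : ‖D w‖ ≤ ‖w‖) (hw : D w ∈ Qhᗮ) (hs : D s = 0) (hdual : ‖j w - j s‖ ≤ ε * ‖w‖)
    (hα : ∀ w, inner 𝕜 (f - p) (j w) = -inner 𝕜 α (D w))
    (hαh : αh ∈ Qh) (hαapprox : ‖α - αh‖ ≤ δ * ‖f - p‖) :
    ‖inner 𝕜 f (j w) - inner 𝕜 f (j s)‖ ≤ (ε * ‖p‖ + δ * ‖f - p‖) * ‖w‖ := by
  have hsplit : inner 𝕜 f (j w) - inner 𝕜 f (j s)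
      = inner 𝕜 p (j w - j s) - inner 𝕜 (α - αh) (D w) := by
    rw [sub_eq_add_neg _ (inner 𝕜 (α - αh) (D w)), ← inner_gradient_sub_eq hα hαh hw hs,
      ← inner_add_left, add_sub_cancel, inner_sub_right]
  have hdivfree : ‖inner 𝕜 p (j w - j s)‖ ≤ ‖p‖ * (ε * ‖w‖) :=
    (norm_inner_le_norm _ _).trans (by gcongr)
  have hgradient : ‖inner 𝕜 (α - αh) (D w)‖ ≤ δ * ‖f - p‖ * ‖w‖ :=
    (norm_inner_le_norm _ _).trans
      (mul_le_mul hαapprox hD (norm_nonneg _) ((norm_nonneg _).trans hαapprox))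
  calc ‖inner 𝕜 f (j w) - inner 𝕜 f (j s)‖
      ≤ ‖inner 𝕜 p (j w - j s)‖ + ‖inner 𝕜 (α - αh) (D w)‖ := hsplit ▸ norm_sub_le _ _
    _ ≤ ‖p‖ * (ε * ‖w‖) + δ * ‖f - p‖ * ‖w‖ := add_le_add hdivfree hgradient
    _ = (ε * ‖p‖ + δ * ‖f - p‖) * ‖w‖ := by ring

variable {V0 Vh0 : Submodule 𝕜 H} {S : H → H} {ν ε₂ δπ : ℝ} {f p : L} {v vh z : H}

theorem consistency_error_estimate
    (hD : ∀ w, ‖D w‖ ≤ ‖w‖) (hV0 : ∀ w ∈ V0, D w = 0) (hVh0 : ∀ w ∈ Vh0, D w ∈ Qhᗮ)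
    (hSmem : ∀ x, S x ∈ V0) (hSorth : ∀ x, x - S x ∈ V0ᗮ)
    (hε₂ : 0 ≤ ε₂) (hduality : ∀ w ∈ Vh0, ‖j w - j (S w)‖ ≤ ε₂ * ‖w‖)
    (hα : ∀ w, inner 𝕜 (f - p) (j w) = -inner 𝕜 α (D w))
    (hαh : αh ∈ Qh) (hαapprox : ‖α - αh‖ ≤ δπ * ‖f - p‖) (hν : 0 < ν)
    (hv : IsGalerkinSolution ν (fun w ↦ inner 𝕜 f (j w)) V0 v)
    (hvh : IsGalerkinSolution ν (fun w ↦ inner 𝕜 f (j w)) Vh0 vh)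
    (hz : z ∈ Vh0) (hvz : v - z ∈ Vh0ᗮ) :
    ‖vh - z‖ ≤ ε₂ * ν⁻¹ * ‖p‖ + δπ * ν⁻¹ * ‖f - p‖ := by
  set e := vh - z
  have he : e ∈ Vh0 := Vh0.sub_mem hvh.mem hz
  have henergy : ν * ‖inner 𝕜 e e‖ ≤ (ε₂ * ‖p‖ + δπ * ‖f - p‖) * ‖e‖ :=
    calc ν * ‖inner 𝕜 e e‖ = ‖(ν : 𝕜) * inner 𝕜 e e‖ := by
          rw [norm_mul, RCLike.norm_of_nonneg hν.le]
      _ = ‖inner 𝕜 f (j e) - inner 𝕜 f (j (S e))‖ := by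
          rw [hvh.mul_inner_sub_eq_sub hv hvz he (hSmem e) (hSorth e)]
      _ ≤ (ε₂ * ‖p‖ + δπ * ‖f - p‖) * ‖e‖ :=
          norm_inner_sub_inner_le (hD e) (hVh0 e he) (hV0 _ (hSmem e)) (hduality e he)
            hα hαh hαapprox
  have hpressure : 0 ≤ δπ * ‖f - p‖ := (norm_nonneg _).trans hαapprox
  have hbound : ‖e‖ ≤ ν⁻¹ * (ε₂ * ‖p‖ + δπ * ‖f - p‖) := by
    refine norm_le_of_norm_inner_self_le (𝕜 := 𝕜) (by positivity) ?_
    rwa [mul_assoc, le_inv_mul_iff₀ hν]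
  exact hbound.trans_eq (by ring)

theorem a_priori_error_estimate_classical_general {Vh : Submodule 𝕜 H} {C : ℝ}
    (hD : ∀ w, ‖D w‖ ≤ ‖w‖) (hV0 : ∀ w ∈ V0, D w = 0) (hVh0 : ∀ w ∈ Vh0, D w ∈ Qhᗮ)
    (hSmem : ∀ x, S x ∈ V0) (hSorth : ∀ x, x - S x ∈ V0ᗮ)
    (hε₂ : 0 ≤ ε₂) (hduality : ∀ w ∈ Vh0, ‖j w - j (S w)‖ ≤ ε₂ * ‖w‖)
    (hα : ∀ w, inner 𝕜 (f - p) (j w) = -inner 𝕜 α (D w))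
    (hαh : αh ∈ Qh) (hαapprox : ‖α - αh‖ ≤ δπ * ‖f - p‖) (hν : 0 < ν)
    (hv : IsGalerkinSolution ν (fun w ↦ inner 𝕜 f (j w)) V0 v)
    (hvh : IsGalerkinSolution ν (fun w ↦ inner 𝕜 f (j w)) Vh0 vh)
    (hz : z ∈ Vh0) (hvz : v - z ∈ Vh0ᗮ)
    (hbestapprox : ‖v - z‖ ≤ C * ⨅ w : Vh, ‖v - (w : H)‖) :
    ‖v - vh‖ ^ 2 ≤ C ^ 2 * (⨅ w : Vh, ‖v - (w : H)‖) ^ 2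
      + (ε₂ * ν⁻¹ * ‖p‖ + δπ * ν⁻¹ * ‖f - p‖) ^ 2 := by
  have hconsistency := consistency_error_estimate hD hV0 hVh0 hSmem hSorth hε₂ hduality
    hα hαh hαapprox hν hv hvh hz hvz
  rw [norm_sub_sq_eq_add_of_sub_mem_orthogonal hvz hz hvh.mem, ← mul_pow]
  gcongr

end MixedMethod

/-- Abstract form of Theorem 6.3 (a priori error estimate for classical conforming mixed
methods): `‖v − v_h‖² ≤ C_F'²(inf_{w ∈ V_h}‖v − w‖)² + (ε₂ν⁻¹‖Pf‖ + δ_πν⁻¹‖f − Pf‖)²`. -/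
theorem a_priori_error_estimate_classical
    {H L Q : Type*}
    [NormedAddCommGroup H] [InnerProductSpace ℝ H] [CompleteSpace H]
    [NormedAddCommGroup L] [InnerProductSpace ℝ L] [CompleteSpace L]
    [NormedAddCommGroup Q] [InnerProductSpace ℝ Q] [CompleteSpace Q]
    (j : H →L[ℝ] L)
    (Lσ : Submodule ℝ L) (hLσclosed : IsClosed (Lσ : Set L))
    -- `P` is the orthogonal projection of `L` onto `Lσ`
    (P : L → L) (hPmem : ∀ x, P x ∈ Lσ) (hPorth : ∀ x, x - P x ∈ Lσᗮ)
    (D : H →L[ℝ] Q) (hD : ∀ w : H, ‖D w‖ ≤ ‖w‖)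
    (V0 : Submodule ℝ H) (hV0closed : IsClosed (V0 : Set H))
    (hjV0 : ∀ w ∈ V0, j w ∈ Lσ) (hV0kerD : ∀ w ∈ V0, D w = 0)
    -- `S` is the orthogonal projection of `H` onto `V0` (continuous Stokes projector)
    (S : H → H) (hSmem : ∀ x, S x ∈ V0) (hSorth : ∀ x, x - S x ∈ V0ᗮ)
    (Qh : Submodule ℝ Q) (hQhclosed : IsClosed (Qh : Set Q))
    -- `πh` is the orthogonal projection of `Q` onto `Qh`
    (πh : Q → Q) (hπmem : ∀ q, πh q ∈ Qh) (hπorth : ∀ q, q - πh q ∈ Qhᗮ)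
    (Vh0 Vh : Submodule ℝ H) (hVh0Vh : Vh0 ≤ Vh)
    (hVh0closed : IsClosed (Vh0 : Set H)) (hVhclosed : IsClosed (Vh : Set H))
    (hdiscdivfree : ∀ w ∈ Vh0, πh (D w) = 0)
    -- `Sh` is the orthogonal projection of `H` onto `Vh0` (discrete Stokes projector)
    (Sh : H → H) (hShmem : ∀ x, Sh x ∈ Vh0) (hShorth : ∀ x, x - Sh x ∈ Vh0ᗮ)
    (ε₂ : ℝ) (hε₂ : 0 ≤ ε₂)
    (hduality : ∀ w ∈ Vh0, ‖j w - j (S w)‖ ≤ ε₂ * ‖w‖)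
    (ν : ℝ) (hν : 0 < ν) (f : L)
    (α : Q) (δπ : ℝ) (hδπ : 0 ≤ δπ)
    (hα : ∀ w : H, ⟪f - P f, j w⟫ = -⟪α, D w⟫)
    (hαapprox : ‖α - πh α‖ ≤ δπ * ‖f - P f‖)
    (v : H) (hv : v ∈ V0)
    (hweak : ∀ w ∈ V0, ν * ⟪v, w⟫ = ⟪f, j w⟫)
    (vh : H) (hvh : vh ∈ Vh0)
    (hweakh : ∀ w ∈ Vh0, ν * ⟪vh, w⟫ = ⟪f, j w⟫)
    (C_F' : ℝ) (hC_F' : 1 ≤ C_F')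
    (hbestapprox : ‖v - Sh v‖ ≤ C_F' * ⨅ w : Vh, ‖v - (w : H)‖) :
    ‖v - vh‖ ^ 2 ≤ C_F' ^ 2 * (⨅ w : Vh, ‖v - (w : H)‖) ^ 2
      + (ε₂ * ν⁻¹ * ‖P f‖ + δπ * ν⁻¹ * ‖f - P f‖) ^ 2 := by
  have hDVh0 : ∀ w ∈ Vh0, D w ∈ Qhᗮ := fun w hw ↦ by
    simpa only [hdiscdivfree w hw, sub_zero] using hπorth (D w)
  exact a_priori_error_estimate_classical_general (j := j.toLinearMap) (D := D.toLinearMap)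
    hD hV0kerD hDVh0 hSmem hSorth hε₂ hduality hα (hπmem α) hαapprox hν ⟨hv, hweak⟩ ⟨hvh, hweakh⟩
    (hShmem v) (hShorth v) hbestapprox
end

section
/- Let H and L be real Hilbert spaces, j : H → L a bounded linear map, L_σ a closed subspace of L with orthogonal projection P : L → L. Let V⁰ be a closed subspace of H with j(V⁰) ⊆ L_σ and orthogonal projection S : H → H onto V⁰, and let V_h⁰ be a closed subspace of H with orthogonal projection S_h : H → H onto V_h⁰. Let I_h : V_h⁰ → L be a linear map with I_h(V_h⁰) ⊆ L_σ and ‖j w − I_h w‖_L ≤ ε₁·‖w‖_H for all w ∈ V_h⁰, where ε₁ ≥ 0, and assume the duality estimate ‖j w − j(S w)‖_L ≤ ε₂·‖w‖_H for all w ∈ V_h⁰, where ε₂ ≥ 0. Let ν > 0, f ∈ L. If v ∈ V⁰ satisfies ν·⟨v, w⟩_H = ⟨f, j w⟩_L for all w ∈ V⁰, and v_h ∈ V_h⁰ satisfies ν·⟨v_h, w⟩_H = ⟨f, I_h w⟩_L for all w ∈ V_h⁰, then ‖v_h − S_h(v)‖_H ≤ (ε₁ + ε₂)·ν⁻¹·‖P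 f‖_L. In particular the bound depends only on the Helmholtz–Hodge projector P f and not on f − P f, and ν⁻¹‖P f‖_L is independent of ν since it equals the norm of the representer of −Δv on V⁰. -/
open RealInnerProductSpace

/-!
Write `Sh v` for the orthogonal projection of `v` onto `Vh0`. The error `w = vh - Sh v` lies in
`Vh0`, so it is an admissible discrete test function, and `⟪Sh v, w⟫ = ⟪v, w⟫ = ⟪v, S w⟫`. The two
weak formulations therefore give `ν ‖w‖² = ⟪f, Ih w - j (S w)⟫`. Both `Ih w` and `j (S w)` lie in
`Lσ`, so `f` may be replaced by any `g` with `f - g ∈ Lσᗮ`; this is what removes the pressure.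
Inserting `j w` and using Cauchy–Schwarz bounds the right-hand side by `(ε₁ + ε₂) ‖g‖ ‖w‖`.
-/

theorem le_inv_mul_of_mul_sq_le {α : Type*} [Field α] [LinearOrder α] [IsStrictOrderedRing α]
    {a b c : α} (hc : 0 < c) (hb : 0 ≤ b) (h : c * a ^ 2 ≤ b * a) : a ≤ c⁻¹ * b := by
  rcases le_or_gt a 0 with ha | ha
  · exact ha.trans (by positivity)
  · rw [le_inv_mul_iff₀ hc]
    exact le_of_mul_le_mul_right (by rwa [mul_assoc, ← sq]) ha

section

open scoped InnerProductSpace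

variable {𝕜 E : Type*} [RCLike 𝕜] [NormedAddCommGroup E] [InnerProductSpace 𝕜 E]
  {K : Submodule 𝕜 E} {x y z : E}

theorem inner_left_eq_of_sub_mem_orthogonal_s8 (hxy : x - y ∈ Kᗮ) (hz : z ∈ K) :
    ⟪x, z⟫_𝕜 = ⟪y, z⟫_𝕜 :=
  sub_eq_zero.mp <| inner_sub_left (𝕜 := 𝕜) x y z ▸ Submodule.inner_left_of_mem_orthogonal hz hxy

theorem inner_right_eq_of_sub_mem_orthogonal_s8 (hxy : x - y ∈ Kᗮ) (hz : z ∈ K) :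
    ⟪z, x⟫_𝕜 = ⟪z, y⟫_𝕜 :=
  sub_eq_zero.mp <| inner_sub_right (𝕜 := 𝕜) z x y ▸ Submodule.inner_right_of_mem_orthogonal hz hxy

theorem norm_inner_le_of_sub_mem_orthogonal (hxy : x - y ∈ Kᗮ) (hz : z ∈ K) :
    ‖⟪x, z⟫_𝕜‖ ≤ ‖y‖ * ‖z‖ :=
  inner_left_eq_of_sub_mem_orthogonal_s8 hxy hz ▸ norm_inner_le_norm y z

theorem norm_sub_sq_eq_inner_sub_inner {V W : Submodule 𝕜 E} {v u w s : E}
    (hv : v ∈ V) (hw : w ∈ W) (hu : u ∈ W) (hvu : v - u ∈ Wᗮ) (hs : w - u - s ∈ Vᗮ) :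
    (‖w - u‖ : 𝕜) ^ 2 = ⟪w, w - u⟫_𝕜 - ⟪v, s⟫_𝕜 := by
  rw [← inner_self_eq_norm_sq_to_K, inner_sub_left,
    ← inner_left_eq_of_sub_mem_orthogonal_s8 hvu (W.sub_mem hw hu),
    inner_right_eq_of_sub_mem_orthogonal_s8 hs hv]

theorem consistency_error_estimate_pressure_robust_general
    {H L : Type*} [NormedAddCommGroup H] [InnerProductSpace 𝕜 H]
    [NormedAddCommGroup L] [InnerProductSpace 𝕜 L]
    {Lσ : Submodule 𝕜 L} {V0 Vh0 : Submodule 𝕜 H}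
    {j : H → L} (hjV0 : ∀ w ∈ V0, j w ∈ Lσ)
    {S : H → H} (hSmem : ∀ w ∈ Vh0, S w ∈ V0) (hSorth : ∀ w ∈ Vh0, w - S w ∈ V0ᗮ)
    {Ih : Vh0 → L} (hIhLσ : ∀ w, Ih w ∈ Lσ)
    {ε₁ ε₂ : ℝ} (hε : 0 ≤ ε₁ + ε₂)
    (hIh : ∀ w : Vh0, ‖j w - Ih w‖ ≤ ε₁ * ‖(w : H)‖)
    (hduality : ∀ w ∈ Vh0, ‖j w - j (S w)‖ ≤ ε₂ * ‖w‖)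
    {ν : 𝕜} (hν : ν ≠ 0) {f g : L} (hfg : f - g ∈ Lσᗮ)
    {v : H} (hv : v ∈ V0) (hweak : ∀ w ∈ V0, ν * ⟪v, w⟫_𝕜 = ⟪f, j w⟫_𝕜)
    {vh : H} (hvh : vh ∈ Vh0) (hweakh : ∀ w : Vh0, ν * ⟪vh, (w : H)⟫_𝕜 = ⟪f, Ih w⟫_𝕜)
    {u : H} (hu : u ∈ Vh0) (hvu : v - u ∈ Vh0ᗮ) :
    ‖vh - u‖ ≤ (ε₁ + ε₂) * ‖ν‖⁻¹ * ‖g‖ := by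
  let w : Vh0 := ⟨vh - u, Vh0.sub_mem hvh hu⟩
  have hSw : S w ∈ V0 := hSmem w w.2
  have error_eq : ν * (‖(w : H)‖ : 𝕜) ^ 2 = ⟪f, Ih w - j (S w)⟫_𝕜 := by
    rw [norm_sub_sq_eq_inner_sub_inner hv hvh hu hvu (hSorth w w.2), mul_sub, hweakh w,
      hweak _ hSw, inner_sub_right]
  have consistency : ‖Ih w - j (S w)‖ ≤ (ε₁ + ε₂) * ‖(w : H)‖ :=
    calc ‖Ih w - j (S w)‖ ≤ ‖Ih w - j w‖ + ‖j w - j (S w)‖ :=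
          norm_sub_le_norm_sub_add_norm_sub _ _ _
      _ ≤ ε₁ * ‖(w : H)‖ + ε₂ * ‖(w : H)‖ :=
          add_le_add (norm_sub_rev (j w) (Ih w) ▸ hIh w) (hduality w w.2)
      _ = (ε₁ + ε₂) * ‖(w : H)‖ := (add_mul _ _ _).symm
  have energy_le : ‖ν‖ * ‖(w : H)‖ ^ 2 ≤ (ε₁ + ε₂) * ‖g‖ * ‖(w : H)‖ :=
    calc ‖ν‖ * ‖(w : H)‖ ^ 2 = ‖⟪f, Ih w - j (S w)⟫_𝕜‖ := by
          rw [← error_eq, norm_mul, norm_pow, RCLike.norm_ofReal, abs_norm]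
      _ ≤ ‖g‖ * ‖Ih w - j (S w)‖ :=
          norm_inner_le_of_sub_mem_orthogonal hfg (Lσ.sub_mem (hIhLσ w) (hjV0 _ hSw))
      _ ≤ ‖g‖ * ((ε₁ + ε₂) * ‖(w : H)‖) := by gcongr
      _ = (ε₁ + ε₂) * ‖g‖ * ‖(w : H)‖ := by ring
  calc ‖vh - u‖ ≤ ‖ν‖⁻¹ * ((ε₁ + ε₂) * ‖g‖) :=
        le_inv_mul_of_mul_sq_le (norm_pos_iff.mpr hν) (by positivity) energy_le
    _ = (ε₁ + ε₂) * ‖ν‖⁻¹ * ‖g‖ := by ring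

end

/-- Abstract form of Theorem 7.1 (pressure-robust consistency error estimate):
`‖v_h − S_h(v)‖_H ≤ (ε₁ + ε₂)ν⁻¹‖P f‖_L`, where `I_h` is the reconstruction operator
(`ε₁` abstracting `C₁h`) and `ε₂` abstracts `C₂hˢ` of the duality estimate. The bound
depends only on the Helmholtz–Hodge projector `P f`; moreover `ν⁻¹‖P f‖` is independent
of `ν`, being the norm of the representer of `−Δv` on `V⁰`. -/
theorem consistency_error_estimate_pressure_robust
    {H L : Type*}
    [NormedAddCommGroup H] [InnerProductSpace ℝ H] [CompleteSpace H]
    [NormedAddCommGroup L] [InnerProductSpace ℝ L] [CompleteSpace L]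
    (j : H →L[ℝ] L)
    (Lσ : Submodule ℝ L) (hLσclosed : IsClosed (Lσ : Set L))
    -- `P` is the orthogonal projection of `L` onto `Lσ`
    (P : L → L) (hPmem : ∀ x, P x ∈ Lσ) (hPorth : ∀ x, x - P x ∈ Lσᗮ)
    (V0 : Submodule ℝ H) (hV0closed : IsClosed (V0 : Set H))
    (hjV0 : ∀ w ∈ V0, j w ∈ Lσ)
    -- `S` is the orthogonal projection of `H` onto `V0` (continuous Stokes projector)
    (S : H → H) (hSmem : ∀ x, S x ∈ V0) (hSorth : ∀ x, x - S x ∈ V0ᗮ)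
    (Vh0 : Submodule ℝ H) (hVh0closed : IsClosed (Vh0 : Set H))
    -- `Sh` is the orthogonal projection of `H` onto `Vh0` (discrete Stokes projector)
    (Sh : H → H) (hShmem : ∀ x, Sh x ∈ Vh0) (hShorth : ∀ x, x - Sh x ∈ Vh0ᗮ)
    (Ih : Vh0 →ₗ[ℝ] L) (hIhLσ : ∀ w : Vh0, Ih w ∈ Lσ)
    (ε₁ : ℝ) (hε₁ : 0 ≤ ε₁)
    (hIh : ∀ w : Vh0, ‖j (w : H) - Ih w‖ ≤ ε₁ * ‖(w : H)‖)
    (ε₂ : ℝ) (hε₂ : 0 ≤ ε₂)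
    (hduality : ∀ w ∈ Vh0, ‖j w - j (S w)‖ ≤ ε₂ * ‖w‖)
    (ν : ℝ) (hν : 0 < ν) (f : L)
    (v : H) (hv : v ∈ V0)
    (hweak : ∀ w ∈ V0, ν * ⟪v, w⟫ = ⟪f, j w⟫)
    (vh : H) (hvh : vh ∈ Vh0)
    (hweakh : ∀ w : Vh0, ν * ⟪vh, (w : H)⟫ = ⟪f, Ih w⟫) :
    ‖vh - Sh v‖ ≤ (ε₁ + ε₂) * ν⁻¹ * ‖P f‖ := by
  simpa only [Real.norm_of_nonneg hν.le] using
    consistency_error_estimate_pressure_robust_general hjV0 (fun w _ ↦ hSmem w) (fun w _ ↦ hSorth w)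
      hIhLσ (add_nonneg hε₁ hε₂) hIh hduality hν.ne' (hPorth f) hv hweak hvh hweakh (hShmem v)
      (hShorth v)
end

section
/- Let H and L be real Hilbert spaces and j : H → L a bounded linear map. Let V⁰ be a closed subspace of H with orthogonal projection S : H → H onto V⁰, and let V_h⁰ ⊆ V_h be closed subspaces of H. Let E : V_h⁰ → V⁰ be a linear map and C_E ≥ 0, ε_E ≥ 0 constants such that for all w ∈ V_h⁰: (i) ⟨u, E w − w⟩_H = 0 for all u ∈ V_h; (ii) ‖E w‖_H ≤ C_E·‖w‖_H; (iii) ‖j(E w) − j w‖_L ≤ ε_E·‖w‖_H. Assume there is δ ≥ 0 such that for every z ∈ L there exist ψ ∈ V⁰ and ψ_h ∈ V_h with ⟨ψ, y⟩_H = ⟨z, j y⟩_L for all y ∈ V⁰ and ‖ψ − ψ_h‖_H ≤ δ·‖z‖_L. Then for every w ∈ V_h⁰ it holds ‖j w − j(S w)‖_L ≤ (ε_E + (1 + C_E)·δ)·‖w‖_H. -/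
open RealInnerProductSpace

/-!
An Aubin–Nitsche argument. Insert the conforming function `v = E w` between `w` and `s = S w`.
The dual solution `ψ` with source `z = j v - j s` gives `‖z‖² = ⟪ψ, v - s⟫`. Since `w - s` is
orthogonal to `ψ` and `v - w` to `ψh`, this equals `⟪ψ - ψh, v - w⟫ ≤ δ * ‖z‖ * ‖v - w‖`.
-/

section

open scoped InnerProductSpace

variable {𝕜 H L : Type*} [RCLike 𝕜] [NormedAddCommGroup H] [InnerProductSpace 𝕜 H]

theorem inner_sub_eq_inner_sub_sub_of_sub_mem_orthogonal {V Vh : Submodule 𝕜 H} {ψ ψh v w s : H}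
    (hψ : ψ ∈ V) (hψh : ψh ∈ Vh) (hws : w - s ∈ Vᗮ) (hvw : v - w ∈ Vhᗮ) :
    ⟪ψ, v - s⟫_𝕜 = ⟪ψ - ψh, v - w⟫_𝕜 := by
  rw [← sub_add_sub_cancel v w s, inner_add_right, inner_sub_left,
    Submodule.inner_right_of_mem_orthogonal hψ hws,
    Submodule.inner_right_of_mem_orthogonal hψh hvw, add_zero, sub_zero]

variable [SeminormedAddCommGroup L] [InnerProductSpace 𝕜 L]

/-- Approximability of the dual problem posed in `V`: for every source `z` it has a solution `ψ`
that is within `δ * ‖z‖` of `Vh`. Solvability, elliptic regularity and the interpolation estimate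
are merged into one property, with `δ` playing the role of `C_CR * C_ell * h ^ s`. -/
def DualProblemApproximable (j : H → L) (V Vh : Submodule 𝕜 H) (δ : ℝ) : Prop :=
  ∀ z : L, ∃ ψ ∈ V, ∃ ψh ∈ Vh, (∀ y ∈ V, ⟪ψ, y⟫_𝕜 = ⟪z, j y⟫_𝕜) ∧ ‖ψ - ψh‖ ≤ δ * ‖z‖

namespace DualProblemApproximable

variable {j : H → L} {V Vh : Submodule 𝕜 H} {δ : ℝ} {v w s : H}

theorem norm_map_sub_map_mul_self_le (h : DualProblemApproximable j V Vh δ)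
    (hv : v ∈ V) (hs : s ∈ V) (hws : w - s ∈ Vᗮ) (hvw : v - w ∈ Vhᗮ) :
    ‖j v - j s‖ * ‖j v - j s‖ ≤ δ * ‖v - w‖ * ‖j v - j s‖ := by
  obtain ⟨ψ, hψ, ψh, hψh, hsol, happrox⟩ := h (j v - j s)
  have hdual : ⟪j v - j s, j v - j s⟫_𝕜 = ⟪ψ - ψh, v - w⟫_𝕜 := by
    rw [inner_sub_right, ← hsol v hv, ← hsol s hs, ← inner_sub_right,
      inner_sub_eq_inner_sub_sub_of_sub_mem_orthogonal hψ hψh hws hvw]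
  calc ‖j v - j s‖ * ‖j v - j s‖ = RCLike.re ⟪ψ - ψh, v - w⟫_𝕜 := by
        rw [← hdual, inner_self_eq_norm_mul_norm]
    _ ≤ ‖ψ - ψh‖ * ‖v - w‖ := re_inner_le_norm _ _
    _ ≤ δ * ‖j v - j s‖ * ‖v - w‖ := by gcongr
    _ = δ * ‖v - w‖ * ‖j v - j s‖ := by ring

theorem norm_map_sub_map_le (h : DualProblemApproximable j V Vh δ) (hδ : 0 ≤ δ)
    (hv : v ∈ V) (hs : s ∈ V) (hws : w - s ∈ Vᗮ) (hvw : v - w ∈ Vhᗮ) :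
    ‖j v - j s‖ ≤ δ * ‖v - w‖ := by
  rcases (norm_nonneg (j v - j s)).eq_or_lt with hzero | hpos
  · rw [← hzero]
    positivity
  · exact le_of_mul_le_mul_right (h.norm_map_sub_map_mul_self_le hv hs hws hvw) hpos

end DualProblemApproximable

theorem duality_estimate_crouzeix_raviart_general {j : H → L} {V Vh : Submodule 𝕜 H}
    {v w s : H} {C ε δ : ℝ} (hdual : DualProblemApproximable j V Vh δ) (hδ : 0 ≤ δ)
    (hs : s ∈ V) (hws : w - s ∈ Vᗮ) (hv : v ∈ V) (hvw : v - w ∈ Vhᗮ)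
    (hbound : ‖v‖ ≤ C * ‖w‖) (happrox : ‖j v - j w‖ ≤ ε * ‖w‖) :
    ‖j w - j s‖ ≤ (ε + (1 + C) * δ) * ‖w‖ := by
  have hsmooth : ‖v - w‖ ≤ (1 + C) * ‖w‖ := by linarith [norm_sub_le v w]
  calc ‖j w - j s‖ ≤ ‖j w - j v‖ + ‖j v - j s‖ := norm_sub_le_norm_sub_add_norm_sub _ _ _
    _ = ‖j v - j w‖ + ‖j v - j s‖ := by rw [norm_sub_rev]
    _ ≤ ε * ‖w‖ + δ * ‖v - w‖ := add_le_add happrox (hdual.norm_map_sub_map_le hδ hv hs hws hvw)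
    _ ≤ ε * ‖w‖ + δ * ((1 + C) * ‖w‖) := by gcongr
    _ = (ε + (1 + C) * δ) * ‖w‖ := by ring

end

/-- Abstract form of Lemma 8.1 (duality estimate for the nonconforming
Crouzeix–Raviart method): `‖j w − j(S w)‖_L ≤ (ε_E + (1 + C_E)δ)‖w‖_H` for all
discretely divergence-free `w ∈ Vh0`, where `E` abstracts the `H¹`-conforming
divergence-free smoothing operator and `δ` the dual-problem regularity data. -/
theorem duality_estimate_crouzeix_raviart
    {H L : Type*}
    [NormedAddCommGroup H] [InnerProductSpace ℝ H] [CompleteSpace H]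
    [NormedAddCommGroup L] [InnerProductSpace ℝ L] [CompleteSpace L]
    (j : H →L[ℝ] L)
    (V0 : Submodule ℝ H) (hV0closed : IsClosed (V0 : Set H))
    -- `S` is the orthogonal projection of `H` onto `V0`
    (S : H → H) (hSmem : ∀ x, S x ∈ V0) (hSorth : ∀ x, x - S x ∈ V0ᗮ)
    (Vh0 Vh : Submodule ℝ H) (hVh0Vh : Vh0 ≤ Vh)
    (hVh0closed : IsClosed (Vh0 : Set H)) (hVhclosed : IsClosed (Vh : Set H))
    -- the smoothing operator `E : Vh0 → V0` and its properties
    (E : Vh0 →ₗ[ℝ] H) (hEV0 : ∀ w : Vh0, E w ∈ V0)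
    (C_E ε_E : ℝ) (hC_E : 0 ≤ C_E) (hε_E : 0 ≤ ε_E)
    (hEorth : ∀ w : Vh0, ∀ u ∈ Vh, ⟪u, E w - (w : H)⟫ = 0)
    (hEbound : ∀ w : Vh0, ‖E w‖ ≤ C_E * ‖(w : H)‖)
    (hEapprox : ∀ w : Vh0, ‖j (E w) - j (w : H)‖ ≤ ε_E * ‖(w : H)‖)
    (δ : ℝ) (hδ : 0 ≤ δ)
    -- solvability of the dual problem with regularity/approximation estimate
    (hdual : ∀ z : L, ∃ ψ ∈ V0, ∃ ψh ∈ Vh,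
      (∀ y ∈ V0, ⟪ψ, y⟫ = ⟪z, j y⟫) ∧ ‖ψ - ψh‖ ≤ δ * ‖z‖) :
    ∀ w ∈ Vh0, ‖j w - j (S w)‖ ≤ (ε_E + (1 + C_E) * δ) * ‖w‖ := by
  intro w hw
  exact duality_estimate_crouzeix_raviart_general hdual hδ (hSmem w) (hSorth w) (hEV0 ⟨w, hw⟩)
    (hEorth ⟨w, hw⟩) (hEbound ⟨w, hw⟩) (hEapprox ⟨w, hw⟩)
end

section
/- Let H and L be real Hilbert spaces, j : H → L a bounded linear map, L_σ a closed subspace of L with orthogonal projection P : L → L. Let V⁰ be a closed subspace of H with j(V⁰) ⊆ L_σ and orthogonal projection S : H → H onto V⁰, and let V_h⁰ ⊆ V_h be closed subspaces of H with orthogonal projection S_h : H → H onto V_h⁰. Let I_h : V_h⁰ → L be linear with I_h(V_h⁰) ⊆ L_σ and ‖j w − I_h w‖_L ≤ ε₁·‖w‖_H for all w ∈ V_h⁰. Let E : V_h⁰ → V⁰ be a linear map with constants C_E ≥ 0, ε_E ≥ 0 such that for all w ∈ V_h⁰: ⟨u, E w − w⟩_H = 0 for all u ∈ V_h, ‖E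 w‖_H ≤ C_E‖w‖_H, and ‖j(E w) − j w‖_L ≤ ε_E‖w‖_H; and assume there is δ ≥ 0 such that for every z ∈ L there exist ψ ∈ V⁰ and ψ_h ∈ V_h with ⟨ψ, y⟩_H = ⟨z, j y⟩_L for all y ∈ V⁰ and ‖ψ − ψ_h‖_H ≤ δ‖z‖_L. Let ν > 0, f ∈ L. If v ∈ V⁰ satisfies ν·⟨v, w⟩_H = ⟨f, j w⟩_L for all w ∈ V⁰, and v_h ∈ V_h⁰ satisfies ν·⟨v_h, w⟩_H = ⟨f, I_h w⟩_L for all w ∈ V_h⁰, then ‖v_h − S_h(v)‖_H ≤ (ε₁ + ε_E + (1 + C_E)·δ)·ν⁻¹·‖P f‖_L. -/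
/-!
Strang's argument reduces the claim to a consistency bound: `v_h - S_h v` is controlled by the
functional `w ↦ ⟪v_h - v, w⟫` on `V_h⁰`. The load is only tested with elements of `L_σ`, so `f` may
be replaced by `P f`, and
`ν ⟪v_h - v, w⟫ = ⟪P f, I_h w - j w⟫ + (⟪P f, j w⟫ - ν ⟪v, w⟫)`.
The first term is the reconstruction error. The second is the defect, on the nonconforming `w`, of
the dual problem with datum `P f`, because `ψ = ν v` solves that problem. Comparing `w` with the
conforming `E w`, and using `E w - w ⟂ V_h` to subtract `ψ_h`, turns it into
`⟪ψ - ψ_h, E w - w⟫ - ⟪P f, j (E w) - j w⟫`.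
-/

open RealInnerProductSpace

section

open InnerProductSpace

variable {𝕜 H L : Type*} [RCLike 𝕜]

section Seminormed

variable [SeminormedAddCommGroup H] [InnerProductSpace 𝕜 H]
  [SeminormedAddCommGroup L] [InnerProductSpace 𝕜 L]

theorem norm_le_of_norm_inner_self_le_s11 {x : H} {C : ℝ} (hC : 0 ≤ C)
    (h : ‖⟪x, x⟫_𝕜‖ ≤ C * ‖x‖) : ‖x‖ ≤ C := by
  rw [inner_self_eq_norm_sq_to_K, norm_pow, RCLike.norm_ofReal, abs_norm, sq] at h
  rcases (norm_nonneg x).eq_or_lt with hx | hx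
  · rwa [← hx]
  · exact le_of_mul_le_mul_right h hx

theorem norm_inner_sub_inner_le_of_smoothing {z x y : L} {ψ ψh e w : H} {C ε δ : ℝ}
    (hψe : ⟪ψ, e⟫_𝕜 = ⟪z, y⟫_𝕜) (hψ : ‖ψ - ψh‖ ≤ δ * ‖z‖) (hψh : ⟪ψh, e - w⟫_𝕜 = 0)
    (he : ‖e‖ ≤ C * ‖w‖) (hyx : ‖y - x‖ ≤ ε * ‖w‖) :
    ‖⟪z, x⟫_𝕜 - ⟪ψ, w⟫_𝕜‖ ≤ (ε + (1 + C) * δ) * ‖z‖ * ‖w‖ := by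
  have hsplit : ⟪z, x⟫_𝕜 - ⟪ψ, w⟫_𝕜 = ⟪ψ - ψh, e - w⟫_𝕜 - ⟪z, y - x⟫_𝕜 := by
    rw [inner_sub_left ψ, hψh, inner_sub_right, inner_sub_right, hψe]
    ring
  have hsub : ‖e - w‖ ≤ (1 + C) * ‖w‖ := by linarith [norm_sub_le e w]
  calc ‖⟪z, x⟫_𝕜 - ⟪ψ, w⟫_𝕜‖
      ≤ ‖⟪ψ - ψh, e - w⟫_𝕜‖ + ‖⟪z, y - x⟫_𝕜‖ := hsplit ▸ norm_sub_le _ _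
    _ ≤ ‖ψ - ψh‖ * ‖e - w‖ + ‖z‖ * ‖y - x‖ :=
        add_le_add (norm_inner_le_norm _ _) (norm_inner_le_norm _ _)
    _ ≤ (δ * ‖z‖) * ((1 + C) * ‖w‖) + ‖z‖ * (ε * ‖w‖) :=
        add_le_add (mul_le_mul hψ hsub (norm_nonneg _) ((norm_nonneg _).trans hψ))
          (mul_le_mul_of_nonneg_left hyx (norm_nonneg _))
    _ = (ε + (1 + C) * δ) * ‖z‖ * ‖w‖ := by ring

theorem norm_inner_sub_inner_le_of_reconstruction {z x r : L} {ψ w : H} {A ε : ℝ}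
    (h : ‖⟪z, x⟫_𝕜 - ⟪ψ, w⟫_𝕜‖ ≤ A * ‖z‖ * ‖w‖) (hr : ‖x - r‖ ≤ ε * ‖w‖) :
    ‖⟪z, r⟫_𝕜 - ⟪ψ, w⟫_𝕜‖ ≤ (ε + A) * ‖z‖ * ‖w‖ := by
  have hsplit : ⟪z, r⟫_𝕜 - ⟪ψ, w⟫_𝕜 = (⟪z, x⟫_𝕜 - ⟪ψ, w⟫_𝕜) - ⟪z, x - r⟫_𝕜 := by
    rw [inner_sub_right]
    ring
  calc ‖⟪z, r⟫_𝕜 - ⟪ψ, w⟫_𝕜‖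
      ≤ ‖⟪z, x⟫_𝕜 - ⟪ψ, w⟫_𝕜‖ + ‖⟪z, x - r⟫_𝕜‖ := hsplit ▸ norm_sub_le _ _
    _ ≤ A * ‖z‖ * ‖w‖ + ‖z‖ * (ε * ‖w‖) :=
        add_le_add h ((norm_inner_le_norm _ _).trans
          (mul_le_mul_of_nonneg_left hr (norm_nonneg _)))
    _ = (ε + A) * ‖z‖ * ‖w‖ := by ring

end Seminormed

variable [NormedAddCommGroup H] [InnerProductSpace 𝕜 H]
  [NormedAddCommGroup L] [InnerProductSpace 𝕜 L]

theorem inner_eq_inner_of_sub_mem_orthogonal_s11 {K : Submodule 𝕜 H} {x y z : H}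
    (hxy : x - y ∈ Kᗮ) (hz : z ∈ K) : ⟪x, z⟫_𝕜 = ⟪y, z⟫_𝕜 := by
  rw [← sub_eq_zero, ← inner_sub_left]
  exact Submodule.inner_left_of_mem_orthogonal hz hxy

theorem norm_sub_le_of_forall_norm_inner_sub_le {K : Submodule 𝕜 H} {u p v : H} {C : ℝ}
    (hp : p ∈ K) (hup : u - p ∈ Kᗮ) (hv : v ∈ K) (hC : 0 ≤ C)
    (h : ∀ w ∈ K, ‖⟪v - u, w⟫_𝕜‖ ≤ C * ‖w‖) : ‖v - p‖ ≤ C := by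
  have hw : v - p ∈ K := K.sub_mem hv hp
  have hinner : ⟪v - u, v - p⟫_𝕜 = ⟪v - p, v - p⟫_𝕜 := by
    rw [inner_sub_left v u, inner_eq_inner_of_sub_mem_orthogonal_s11 hup hw, ← inner_sub_left]
  exact norm_le_of_norm_inner_self_le_s11 hC (hinner ▸ h _ hw)

theorem eq_of_forall_mem_inner_eq {K : Submodule 𝕜 H} {x y : H} (hx : x ∈ K) (hy : y ∈ K)
    (h : ∀ z ∈ K, ⟪x, z⟫_𝕜 = ⟪y, z⟫_𝕜) : x = y :=
  congrArg Subtype.val <|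
    ext_inner_right 𝕜 (x := (⟨x, hx⟩ : K)) (y := ⟨y, hy⟩) fun z => h z z.2

theorem inner_eq_mul_inner_of_forall_mem {K : Submodule 𝕜 H} {c : 𝕜} {x y : H}
    (hx : x ∈ K) (hy : y ∈ K) (h : ∀ z ∈ K, ⟪x, z⟫_𝕜 = c * ⟪y, z⟫_𝕜) (z : H) :
    ⟪x, z⟫_𝕜 = c * ⟪y, z⟫_𝕜 := by
  have hsmul (z : H) : ⟪starRingEnd 𝕜 c • y, z⟫_𝕜 = c * ⟪y, z⟫_𝕜 := by
    rw [inner_smul_left, RCLike.conj_conj]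
  have hxy : x = starRingEnd 𝕜 c • y :=
    eq_of_forall_mem_inner_eq hx (K.smul_mem _ hy) fun z hz => (h z hz).trans (hsmul z).symm
  rw [hxy, hsmul]

/-- `g` and `p` play the roles of `P f` and `S_h v`. -/
theorem consistency_error_estimate_crouzeix_raviart_pressure_robust_general
    {j : H → L} {Lσ : Submodule 𝕜 L} {V0 Vh0 Vh : Submodule 𝕜 H} (hjV0 : ∀ w ∈ V0, j w ∈ Lσ)
    {Ih : Vh0 → L} (hIhLσ : ∀ w, Ih w ∈ Lσ) {ε₁ : ℝ} (hε₁ : 0 ≤ ε₁)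
    (hIh : ∀ w : Vh0, ‖j w - Ih w‖ ≤ ε₁ * ‖(w : H)‖)
    {E : Vh0 → H} (hEV0 : ∀ w, E w ∈ V0) {C_E ε_E : ℝ} (hC_E : 0 ≤ C_E) (hε_E : 0 ≤ ε_E)
    (hEorth : ∀ w : Vh0, ∀ u ∈ Vh, ⟪u, E w - (w : H)⟫_𝕜 = 0)
    (hEbound : ∀ w : Vh0, ‖E w‖ ≤ C_E * ‖(w : H)‖)
    (hEapprox : ∀ w : Vh0, ‖j (E w) - j w‖ ≤ ε_E * ‖(w : H)‖)
    {f g : L} (hfg : f - g ∈ Lσᗮ) {δ : ℝ} (hδ : 0 ≤ δ)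
    (hdual : ∃ ψ ∈ V0, ∃ ψh ∈ Vh,
      (∀ y ∈ V0, ⟪ψ, y⟫_𝕜 = ⟪g, j y⟫_𝕜) ∧ ‖ψ - ψh‖ ≤ δ * ‖g‖)
    {ν : 𝕜} (hν : ν ≠ 0) {v : H} (hv : v ∈ V0) (hweak : ∀ w ∈ V0, ν * ⟪v, w⟫_𝕜 = ⟪f, j w⟫_𝕜)
    {p : H} (hp : p ∈ Vh0) (hvp : v - p ∈ Vh0ᗮ)
    {vh : H} (hvh : vh ∈ Vh0) (hweakh : ∀ w : Vh0, ν * ⟪vh, (w : H)⟫_𝕜 = ⟪f, Ih w⟫_𝕜) :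
    ‖vh - p‖ ≤ (ε₁ + ε_E + (1 + C_E) * δ) * ‖ν‖⁻¹ * ‖g‖ := by
  obtain ⟨ψ, hψ, ψh, hψh, hψeq, hψδ⟩ := hdual
  have hψv : ∀ w, ⟪ψ, w⟫_𝕜 = ν * ⟪v, w⟫_𝕜 :=
    inner_eq_mul_inner_of_forall_mem hψ hv fun y hy => by
      rw [hψeq y hy, hweak y hy, inner_eq_inner_of_sub_mem_orthogonal_s11 hfg (hjV0 y hy)]
  refine norm_sub_le_of_forall_norm_inner_sub_le hp hvp hvh (by positivity) fun w hw => ?_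
  lift w to Vh0 using hw
  have hresidual : ν * ⟪vh - v, (w : H)⟫_𝕜 = ⟪g, Ih w⟫_𝕜 - ⟪ψ, (w : H)⟫_𝕜 := by
    rw [inner_sub_left, mul_sub, hweakh, inner_eq_inner_of_sub_mem_orthogonal_s11 hfg (hIhLσ w), hψv]
  have hduality : ‖⟪g, j w⟫_𝕜 - ⟪ψ, (w : H)⟫_𝕜‖ ≤
      (ε_E + (1 + C_E) * δ) * ‖g‖ * ‖(w : H)‖ :=
    norm_inner_sub_inner_le_of_smoothing (hψeq _ (hEV0 w)) hψδ (hEorth w ψh hψh)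
      (hEbound w) (hEapprox w)
  calc ‖⟪vh - v, (w : H)⟫_𝕜‖
      = ‖ν‖⁻¹ * ‖⟪g, Ih w⟫_𝕜 - ⟪ψ, (w : H)⟫_𝕜‖ := by
        rw [← hresidual, norm_mul, inv_mul_cancel_left₀ (norm_ne_zero_iff.mpr hν)]
    _ ≤ ‖ν‖⁻¹ * ((ε₁ + (ε_E + (1 + C_E) * δ)) * ‖g‖ * ‖(w : H)‖) := by
        gcongr
        exact norm_inner_sub_inner_le_of_reconstruction hduality (hIh w)
    _ = (ε₁ + ε_E + (1 + C_E) * δ) * ‖ν‖⁻¹ * ‖g‖ * ‖(w : H)‖ := by ring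

end

/-- Abstract form of the first estimate of Theorem 8.2 (pressure-robust consistency error
estimate for the modified nonconforming Crouzeix–Raviart method):
`‖v_h − S_h(v)‖_H ≤ (ε₁ + ε_E + (1 + C_E)δ)ν⁻¹‖P f‖_L`. -/
theorem consistency_error_estimate_crouzeix_raviart_pressure_robust
    {H L : Type*}
    [NormedAddCommGroup H] [InnerProductSpace ℝ H] [CompleteSpace H]
    [NormedAddCommGroup L] [InnerProductSpace ℝ L] [CompleteSpace L]
    (j : H →L[ℝ] L)
    (Lσ : Submodule ℝ L) (hLσclosed : IsClosed (Lσ : Set L))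
    -- `P` is the orthogonal projection of `L` onto `Lσ`
    (P : L → L) (hPmem : ∀ x, P x ∈ Lσ) (hPorth : ∀ x, x - P x ∈ Lσᗮ)
    (V0 : Submodule ℝ H) (hV0closed : IsClosed (V0 : Set H))
    (hjV0 : ∀ w ∈ V0, j w ∈ Lσ)
    -- `S` is the orthogonal projection of `H` onto `V0` (continuous Stokes projector)
    (S : H → H) (hSmem : ∀ x, S x ∈ V0) (hSorth : ∀ x, x - S x ∈ V0ᗮ)
    (Vh0 Vh : Submodule ℝ H) (hVh0Vh : Vh0 ≤ Vh)
    (hVh0closed : IsClosed (Vh0 : Set H)) (hVhclosed : IsClosed (Vh : Set H))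
    -- `Sh` is the orthogonal projection of `H` onto `Vh0` (discrete Stokes projector)
    (Sh : H → H) (hShmem : ∀ x, Sh x ∈ Vh0) (hShorth : ∀ x, x - Sh x ∈ Vh0ᗮ)
    -- the reconstruction operator `Ih`
    (Ih : Vh0 →ₗ[ℝ] L) (hIhLσ : ∀ w : Vh0, Ih w ∈ Lσ)
    (ε₁ : ℝ) (hε₁ : 0 ≤ ε₁)
    (hIh : ∀ w : Vh0, ‖j (w : H) - Ih w‖ ≤ ε₁ * ‖(w : H)‖)
    -- the smoothing operator `E : Vh0 → V0` and its properties
    (E : Vh0 →ₗ[ℝ] H) (hEV0 : ∀ w : Vh0, E w ∈ V0)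
    (C_E ε_E : ℝ) (hC_E : 0 ≤ C_E) (hε_E : 0 ≤ ε_E)
    (hEorth : ∀ w : Vh0, ∀ u ∈ Vh, ⟪u, E w - (w : H)⟫ = 0)
    (hEbound : ∀ w : Vh0, ‖E w‖ ≤ C_E * ‖(w : H)‖)
    (hEapprox : ∀ w : Vh0, ‖j (E w) - j (w : H)‖ ≤ ε_E * ‖(w : H)‖)
    (δ : ℝ) (hδ : 0 ≤ δ)
    -- solvability of the dual problem with regularity/approximation estimate
    (hdual : ∀ z : L, ∃ ψ ∈ V0, ∃ ψh ∈ Vh,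
      (∀ y ∈ V0, ⟪ψ, y⟫ = ⟪z, j y⟫) ∧ ‖ψ - ψh‖ ≤ δ * ‖z‖)
    (ν : ℝ) (hν : 0 < ν) (f : L)
    (v : H) (hv : v ∈ V0)
    (hweak : ∀ w ∈ V0, ν * ⟪v, w⟫ = ⟪f, j w⟫)
    (vh : H) (hvh : vh ∈ Vh0)
    (hweakh : ∀ w : Vh0, ν * ⟪vh, (w : H)⟫ = ⟪f, Ih w⟫) :
    ‖vh - Sh v‖ ≤ (ε₁ + ε_E + (1 + C_E) * δ) * ν⁻¹ * ‖P f‖ := by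
  simpa only [Real.norm_of_nonneg hν.le] using
    consistency_error_estimate_crouzeix_raviart_pressure_robust_general hjV0 hIhLσ hε₁ hIh hEV0
      hC_E hε_E hEorth hEbound hEapprox (hPorth f) hδ (hdual (P f)) hν.ne' hv hweak (hShmem v)
      (hShorth v) hvh hweakh
end

section
/- Let H and L be real Hilbert spaces, j : H → L a bounded linear map, L_σ a closed subspace of L with orthogonal projection P : L → L. Let V⁰ be a closed subspace of H with j(V⁰) ⊆ L_σ and orthogonal projection S : H → H onto V⁰, and let V_h⁰ be a closed subspace of H with orthogonal projection S_h : H → H onto V_h⁰. Assume the duality estimate ‖j w − j(S w)‖_L ≤ ε₂·‖w‖_H for all w ∈ V_h⁰ with ε₂ ≥ 0, and let E : V_h⁰ → V⁰ be a linear map with ‖j(E w) − j w‖_L ≤ ε_E·‖w‖_H for all w ∈ V_h⁰, where ε_E ≥ 0. Let ν > 0, f ∈ L. If v ∈ V⁰ satisfies ν·⟨v, w⟩_H = ⟨f, j w⟩_L for all w ∈ V⁰, and v_h ∈ V_h⁰ satisfies ν·⟨v_h, w⟩_H = ⟨f, j w⟩_L for all w ∈ V_h⁰, then ‖v_h − S_h(v)‖_H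 ≤ ε₂·ν⁻¹·‖P f‖_L + ε_E·ν⁻¹·‖f − P f‖_L. -/
open RealInnerProductSpace

/-!
The error `e = vh - Sh v` lies in `Vh0`. Testing the discrete problem with `e` and the continuous
one with `S e`, the orthogonality of the two projections gives `ν ‖e‖² = ⟪f, j e - j (S e)⟫`.
Split `f = P f + (f - P f)`. The first part is controlled by the duality estimate. The second
annihilates `j V0`, which contains both `j (S e)` and `j (E e)`, so `S e` may be replaced by `E e`
and the approximation property of `E` applies.
-/

section

open scoped InnerProductSpace

theorem le_inv_mul_of_mul_sq_le_mul {K : Type*} [Field K] [LinearOrder K] [IsStrictOrderedRing K]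
    {a c r : K} (ha : 0 < a) (hc : 0 ≤ c) (hr : 0 ≤ r) (h : a * r ^ 2 ≤ c * r) : r ≤ a⁻¹ * c := by
  rcases hr.eq_or_lt with rfl | hr
  · positivity
  · rw [le_inv_mul_iff₀ ha]
    exact le_of_mul_le_mul_right (by linarith) hr

variable {𝕜 H L : Type*} [RCLike 𝕜] [SeminormedAddCommGroup L] [InnerProductSpace 𝕜 L]

theorem inner_sub_eq_inner_sub_add_inner_sub {f g a b : L} (x : L)
    (hab : ⟪f - g, a⟫_𝕜 = ⟪f - g, b⟫_𝕜) :
    ⟪f, x - a⟫_𝕜 = ⟪g, x - a⟫_𝕜 + ⟪f - g, x - b⟫_𝕜 := by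
  rw [inner_sub_right (f - g), ← hab, ← inner_sub_right, ← inner_add_left, add_sub_cancel]

theorem norm_inner_sub_le_of_inner_sub_eq {f g a b : L} (x : L)
    (hab : ⟪f - g, a⟫_𝕜 = ⟪f - g, b⟫_𝕜) :
    ‖⟪f, x - a⟫_𝕜‖ ≤ ‖g‖ * ‖x - a‖ + ‖f - g‖ * ‖x - b‖ := by
  rw [inner_sub_eq_inner_sub_add_inner_sub x hab]
  exact norm_add_le_of_le (norm_inner_le_norm _ _) (norm_inner_le_norm _ _)

theorem mul_inner_self_sub_eq_inner_map_sub [NormedAddCommGroup H] [InnerProductSpace 𝕜 H]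
    {j : H →ₗ[𝕜] L} {V W : Submodule 𝕜 H} {ν : 𝕜} {f : L} {v vh u s : H}
    (hv : v ∈ V) (hweak : ∀ w ∈ V, ν * ⟪v, w⟫_𝕜 = ⟪f, j w⟫_𝕜)
    (hvh : vh ∈ W) (hweakh : ∀ w ∈ W, ν * ⟪vh, w⟫_𝕜 = ⟪f, j w⟫_𝕜)
    (hu : u ∈ W) (hvu : v - u ∈ Wᗮ) (hs : s ∈ V) (hes : vh - u - s ∈ Vᗮ) :
    ν * ⟪vh - u, vh - u⟫_𝕜 = ⟪f, j (vh - u) - j s⟫_𝕜 := by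
  have he : vh - u ∈ W := W.sub_mem hvh hu
  have hue : ⟪v, vh - u⟫_𝕜 = ⟪u, vh - u⟫_𝕜 := by
    rw [← sub_eq_zero, ← inner_sub_left]
    exact Submodule.inner_left_of_mem_orthogonal he hvu
  have hve : ⟪v, vh - u⟫_𝕜 = ⟪v, s⟫_𝕜 := by
    rw [← sub_eq_zero, ← inner_sub_right]
    exact Submodule.inner_right_of_mem_orthogonal hv hes
  calc ν * ⟪vh - u, vh - u⟫_𝕜
      = ν * ⟪vh, vh - u⟫_𝕜 - ν * ⟪v, s⟫_𝕜 := by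
        rw [inner_sub_left vh u, ← hue, hve, mul_sub]
    _ = ⟪f, j (vh - u) - j s⟫_𝕜 := by
        rw [hweakh _ he, hweak s hs, inner_sub_right]

/-- Here `g` and `u` stand for the projections `P f` and `Sh v`. -/
theorem consistency_error_estimate_crouzeix_raviart_classical_general
    [NormedAddCommGroup H] [InnerProductSpace 𝕜 H] (j : H →ₗ[𝕜] L) {V0 Vh0 : Submodule 𝕜 H}
    (S E : Vh0 → V0) (hSorth : ∀ w : Vh0, (w - S w : H) ∈ V0ᗮ)
    {ε₂ ε_E : ℝ} (hε₂ : 0 ≤ ε₂) (hε_E : 0 ≤ ε_E)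
    (hduality : ∀ w : Vh0, ‖j w - j (S w)‖ ≤ ε₂ * ‖w‖)
    (hEapprox : ∀ w : Vh0, ‖j (E w) - j w‖ ≤ ε_E * ‖w‖)
    {ν : 𝕜} (hν : ν ≠ 0) {f g : L} (hfg : ∀ w ∈ V0, ⟪f - g, j w⟫_𝕜 = 0)
    {v vh u : H} (hv : v ∈ V0) (hweak : ∀ w ∈ V0, ν * ⟪v, w⟫_𝕜 = ⟪f, j w⟫_𝕜)
    (hvh : vh ∈ Vh0) (hweakh : ∀ w ∈ Vh0, ν * ⟪vh, w⟫_𝕜 = ⟪f, j w⟫_𝕜)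
    (hu : u ∈ Vh0) (hvu : v - u ∈ Vh0ᗮ) :
    ‖vh - u‖ ≤ ε₂ * ‖ν‖⁻¹ * ‖g‖ + ε_E * ‖ν‖⁻¹ * ‖f - g‖ := by
  let e : Vh0 := ⟨vh - u, Vh0.sub_mem hvh hu⟩
  have henergy : ν * ⟪(e : H), e⟫_𝕜 = ⟪f, j e - j (S e)⟫_𝕜 :=
    mul_inner_self_sub_eq_inner_map_sub hv hweak hvh hweakh hu hvu (S e).2 (hSorth e)
  have hexchange : ⟪f - g, j (S e)⟫_𝕜 = ⟪f - g, j (E e)⟫_𝕜 :=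
    (hfg _ (S e).2).trans (hfg _ (E e).2).symm
  have hbound : ‖ν‖ * ‖e‖ ^ 2 ≤ (ε₂ * ‖g‖ + ε_E * ‖f - g‖) * ‖e‖ :=
    calc ‖ν‖ * ‖e‖ ^ 2 = ‖⟪f, j e - j (S e)⟫_𝕜‖ := by
          rw [← henergy, norm_mul, inner_self_eq_norm_sq_to_K, norm_pow, RCLike.norm_ofReal,
            abs_norm, Submodule.coe_norm]
      _ ≤ ‖g‖ * ‖j e - j (S e)‖ + ‖f - g‖ * ‖j e - j (E e)‖ :=
          norm_inner_sub_le_of_inner_sub_eq _ hexchange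
      _ ≤ ‖g‖ * (ε₂ * ‖e‖) + ‖f - g‖ * (ε_E * ‖e‖) := by
          gcongr
          · exact hduality e
          · exact norm_sub_rev (j e) (j (E e)) ▸ hEapprox e
      _ = (ε₂ * ‖g‖ + ε_E * ‖f - g‖) * ‖e‖ := by ring
  calc ‖vh - u‖ ≤ ‖ν‖⁻¹ * (ε₂ * ‖g‖ + ε_E * ‖f - g‖) :=
        le_inv_mul_of_mul_sq_le_mul (norm_pos_iff.2 hν) (by positivity) (norm_nonneg _) hbound
    _ = ε₂ * ‖ν‖⁻¹ * ‖g‖ + ε_E * ‖ν‖⁻¹ * ‖f - g‖ := by ring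

end

/-- Abstract form of the second estimate of Theorem 8.2 (consistency error estimate for the
classical, unmodified, nonconforming Crouzeix–Raviart method):
`‖v_h − S_h(v)‖_H ≤ ε₂ ν⁻¹‖P f‖_L + ε_E ν⁻¹‖f − P f‖_L`. -/
theorem consistency_error_estimate_crouzeix_raviart_classical
    {H L : Type*}
    [NormedAddCommGroup H] [InnerProductSpace ℝ H] [CompleteSpace H]
    [NormedAddCommGroup L] [InnerProductSpace ℝ L] [CompleteSpace L]
    (j : H →L[ℝ] L)
    (Lσ : Submodule ℝ L) (hLσclosed : IsClosed (Lσ : Set L))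
    -- `P` is the orthogonal projection of `L` onto `Lσ`
    (P : L → L) (hPmem : ∀ x, P x ∈ Lσ) (hPorth : ∀ x, x - P x ∈ Lσᗮ)
    (V0 : Submodule ℝ H) (hV0closed : IsClosed (V0 : Set H))
    (hjV0 : ∀ w ∈ V0, j w ∈ Lσ)
    -- `S` is the orthogonal projection of `H` onto `V0` (continuous Stokes projector)
    (S : H → H) (hSmem : ∀ x, S x ∈ V0) (hSorth : ∀ x, x - S x ∈ V0ᗮ)
    (Vh0 : Submodule ℝ H) (hVh0closed : IsClosed (Vh0 : Set H))
    -- `Sh` is the orthogonal projection of `H` onto `Vh0` (discrete Stokes projector)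
    (Sh : H → H) (hShmem : ∀ x, Sh x ∈ Vh0) (hShorth : ∀ x, x - Sh x ∈ Vh0ᗮ)
    (ε₂ : ℝ) (hε₂ : 0 ≤ ε₂)
    (hduality : ∀ w ∈ Vh0, ‖j w - j (S w)‖ ≤ ε₂ * ‖w‖)
    -- the smoothing operator `E : Vh0 → V0` and its approximation property
    (E : Vh0 →ₗ[ℝ] H) (hEV0 : ∀ w : Vh0, E w ∈ V0)
    (ε_E : ℝ) (hε_E : 0 ≤ ε_E)
    (hEapprox : ∀ w : Vh0, ‖j (E w) - j (w : H)‖ ≤ ε_E * ‖(w : H)‖)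
    (ν : ℝ) (hν : 0 < ν) (f : L)
    (v : H) (hv : v ∈ V0)
    (hweak : ∀ w ∈ V0, ν * ⟪v, w⟫ = ⟪f, j w⟫)
    (vh : H) (hvh : vh ∈ Vh0)
    (hweakh : ∀ w ∈ Vh0, ν * ⟪vh, w⟫ = ⟪f, j w⟫) :
    ‖vh - Sh v‖ ≤ ε₂ * ν⁻¹ * ‖P f‖ + ε_E * ν⁻¹ * ‖f - P f‖ := by
  simpa only [Real.norm_of_nonneg hν.le] using
    consistency_error_estimate_crouzeix_raviart_classical_general j.toLinearMap
      (fun w ↦ ⟨S w, hSmem w⟩) (fun w ↦ ⟨E w, hEV0 w⟩) (fun w ↦ hSorth w) hε₂ hε_E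
      (fun w ↦ hduality w w.2) hEapprox hν.ne'
      (fun w hw ↦ Submodule.inner_left_of_mem_orthogonal (hjV0 w hw) (hPorth f))
      hv hweak hvh hweakh (hShmem v) (hShorth v)
end
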